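/- arXiv:0810.0261 — 5 statements merged into one kernel-verified Lean document; each statement's English description precedes it below -/
import Mathlib

section
/- Let $k \geq 1$ and let $M$ be a $k \times k$ matrix with nonnegative integer entries that is irreducible, with some diagonal entry nonzero. If $v \in \mathbb{R}^k$ is a vector with all entries positive and $\mu \in \mathbb{R}$ satisfies $M v = \mu v$, then $\mu^{2k} \geq k$. -/
/-!
Write `l` for the index with `M l l ≥ 1`. The set of indices from which `l` can be reached in exactly
`n` steps grows with `n`, because a walk ending at `l` can be prolonged by the loop at `l`. Once this
set stops growing it is constant from then on, so by irreducibility it is everything; hence it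
is everything at step `k` (`pow_card_apply_pos`). Applying this to `M` and to its transpose, every
index reaches `l` in `k` steps and is reached from `l` in `k` steps, so every entry of `M ^ (2 * k)`
is at least `1`. Therefore `μ ^ (2 * k) * v i ≥ ∑ j, v j` for all `i`, and summing over `i` and
dividing by `∑ j, v j > 0` gives the bound.
-/

/-- The indices from which `l` is reached in exactly `n` steps of the graph of `M`. -/
def reachSet {k : ℕ} (M : Matrix (Fin k) (Fin k) ℕ) (l : Fin k) (n : ℕ) : Finset (Fin k) :=
  Finset.univ.filter fun i => 0 < (M ^ n) i l

lemma mem_reachSet {k : ℕ} {M : Matrix (Fin k) (Fin k) ℕ} {l : Fin k} {n : ℕ} {i : Fin k} :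
    i ∈ reachSet M l n ↔ 0 < (M ^ n) i l := by
  simp [reachSet]

lemma mul_apply_pos_iff {k : ℕ} (A B : Matrix (Fin k) (Fin k) ℕ) (i j : Fin k) :
    0 < (A * B) i j ↔ ∃ x, 0 < A i x ∧ 0 < B x j := by
  rw [Matrix.mul_apply, Finset.sum_pos_iff]
  simp [Nat.pos_iff_ne_zero]

lemma mem_reachSet_succ {k : ℕ} {M : Matrix (Fin k) (Fin k) ℕ} {l : Fin k} {n : ℕ} {i : Fin k} :
    i ∈ reachSet M l (n + 1) ↔ ∃ x, 0 < M i x ∧ x ∈ reachSet M l n := by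
  simp only [mem_reachSet, pow_succ', mul_apply_pos_iff]

lemma reachSet_subset_succ {k : ℕ} {M : Matrix (Fin k) (Fin k) ℕ} {l : Fin k} (hl : 1 ≤ M l l)
    (n : ℕ) : reachSet M l n ⊆ reachSet M l (n + 1) := by
  intro i hi
  rw [mem_reachSet] at hi ⊢
  rw [pow_succ, mul_apply_pos_iff]
  exact ⟨l, hi, hl⟩

/-- If the reachability sets do not grow from step `n` to step `n + 1`, then they have
exhausted all indices. -/
lemma reachSet_eq_univ_of_stable {k : ℕ} {M : Matrix (Fin k) (Fin k) ℕ} {l : Fin k}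
    (hirr : ∀ i, ∃ r : ℕ, 1 ≤ r ∧ 0 < (M ^ r) i l) (hl : 1 ≤ M l l) {n : ℕ}
    (h : reachSet M l (n + 1) = reachSet M l n) : reachSet M l n = Finset.univ := by
  have hsub : ∀ m, reachSet M l m ⊆ reachSet M l n := by
    intro m
    induction m with
    | zero => exact monotone_nat_of_le_succ (reachSet_subset_succ hl) (Nat.zero_le n)
    | succ m ih =>
      intro i hi
      obtain ⟨x, hx, hxm⟩ := mem_reachSet_succ.1 hi
      rw [← h]
      exact mem_reachSet_succ.2 ⟨x, hx, ih hxm⟩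
  refine Finset.eq_univ_of_forall fun i => ?_
  obtain ⟨r, -, hr⟩ := hirr i
  exact hsub r (mem_reachSet.2 hr)

/-- Every index reaches `l` in exactly `k` steps. -/
lemma pow_card_apply_pos {k : ℕ} {M : Matrix (Fin k) (Fin k) ℕ} {l : Fin k}
    (hirr : ∀ i, ∃ r : ℕ, 1 ≤ r ∧ 0 < (M ^ r) i l) (hl : 1 ≤ M l l) (i : Fin k) :
    0 < (M ^ k) i l := by
  have key : ∀ n, reachSet M l n = Finset.univ ∨ n ≤ (reachSet M l n).card := by
    intro n
    induction n with
    | zero => exact Or.inr (Nat.zero_le _)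
    | succ n ih =>
      by_cases hst : reachSet M l (n + 1) = reachSet M l n
      · exact Or.inl (hst.trans (reachSet_eq_univ_of_stable hirr hl hst))
      · have hlt : reachSet M l n ⊂ reachSet M l (n + 1) :=
          (reachSet_subset_succ hl n).ssubset_of_ne (Ne.symm hst)
        rcases ih with ih | ih
        · exact Or.inl (Finset.univ_subset_iff.1 (ih ▸ hlt.subset))
        · exact Or.inr (Nat.succ_le_of_lt (ih.trans_lt (Finset.card_lt_card hlt)))
  have huniv : reachSet M l k = Finset.univ := by
    rcases key k with h | h
    · exact h
    · refine Finset.eq_univ_of_card _ (le_antisymm (Finset.card_le_univ _) ?_)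
      simpa using h
  exact mem_reachSet.1 (huniv ▸ Finset.mem_univ i)

lemma pow_mulVec_eigen {k : ℕ} {A : Matrix (Fin k) (Fin k) ℝ} {v : Fin k → ℝ} {μ : ℝ}
    (h : A.mulVec v = μ • v) (n : ℕ) : (A ^ n).mulVec v = μ ^ n • v := by
  induction n with
  | zero => simp
  | succ n ih =>
    rw [pow_succ, ← Matrix.mulVec_mulVec, h, Matrix.mulVec_smul, ih, smul_smul, pow_succ']


/-- If `M` is a `k × k` irreducible matrix with nonnegative integer
entries with a nonzero diagonal entry, and `v` is a positive real eigenvector with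
eigenvalue `μ`, then `μ ^ (2 * k) ≥ k`. -/
theorem perron_eigenvalue_power_ge_of_nonzero_diagonal
    (k : ℕ) (hk : 1 ≤ k) (M : Matrix (Fin k) (Fin k) ℕ)
    (hirr : ∀ i j : Fin k, ∃ r : ℕ, 1 ≤ r ∧ 0 < (M ^ r) i j)
    (l : Fin k) (hl : 1 ≤ M l l)
    (v : Fin k → ℝ) (hv : ∀ i, 0 < v i) (μ : ℝ)
    (heig : (M.map (Nat.cast : ℕ → ℝ)).mulVec v = μ • v) :
    (k : ℝ) ≤ μ ^ (2 * k) := by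
  have hto : ∀ i, 0 < (M ^ k) i l := pow_card_apply_pos (fun i => hirr i l) hl
  have hfrom : ∀ j, 0 < (M ^ k) l j := by
    intro j
    have h := pow_card_apply_pos (M := M.transpose) (l := l)
      (fun i => by simpa only [← Matrix.transpose_pow, Matrix.transpose_apply] using hirr l i)
      hl j
    simpa only [← Matrix.transpose_pow, Matrix.transpose_apply] using h
  have hall : ∀ i j, 1 ≤ (M ^ (2 * k)) i j := by
    intro i j
    rw [two_mul, pow_add]
    exact (mul_apply_pos_iff _ _ i j).2 ⟨l, hto i, hfrom j⟩
  have hcast : (M.map (Nat.cast : ℕ → ℝ)) ^ (2 * k) = (M ^ (2 * k)).map (Nat.cast : ℕ → ℝ) :=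
    (Matrix.map_pow M (Nat.castRingHom ℝ) (2 * k)).symm
  have hrow : ∀ i, ∑ j, v j ≤ μ ^ (2 * k) * v i := by
    intro i
    have h := congrFun (pow_mulVec_eigen heig (2 * k)) i
    rw [hcast] at h
    simp only [Matrix.mulVec, dotProduct, Matrix.map_apply, Pi.smul_apply, smul_eq_mul] at h
    rw [← h]
    refine Finset.sum_le_sum fun j _ => le_mul_of_one_le_left (hv j).le ?_
    exact_mod_cast hall i j
  have hsum : (0 : ℝ) < ∑ j, v j := Finset.sum_pos (fun j _ => hv j) ⟨l, Finset.mem_univ l⟩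
  have htot := Finset.sum_le_sum fun i (_ : i ∈ Finset.univ) => hrow i
  rw [← Finset.mul_sum, Finset.sum_const, Finset.card_univ, Fintype.card_fin,
    nsmul_eq_mul] at htot
  exact le_of_mul_le_mul_right htot hsum
end

section
/- Let $M$ be a $k \times k$ and $M_1$ a $k_1 \times k_1$ matrix, both with nonnegative integer entries and irreducible, and suppose $v, v_1$ are positive eigenvectors with $M v = \mu v$, $M_1 v_1 = \mu_1 v_1$, where $\mu, \mu_1 > 0$. Suppose there are indices $i$ (for $M$) and $i_1$ (for $M_1$) such that for every integer $d \geq 1$, the $i_1$-th row sum of $M_1^{d+1}$ equals the $i$-th row sum of $M^{d}$, i.e., $\sum_j (M_1^{d+1})_{i_1,j} = \sum_j (M^{d})_{i,j}$, and suppose these row sums are all at least $1$. Then $\mu_1 \leq \mu$. -/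
/-!
A positive eigenvector `v` with `A v = μ v` satisfies `∑ j, (A ^ d) i j * v j = μ ^ d * v i`.
Bounding the entries `v j` between their minimum and maximum shows that the `i`-th row sum of
`A ^ d` lies between two positive constant multiples of `μ ^ d`
(`exists_rowSum_bounds`). An index shift by one only changes the constants, so the equality of
row sums forces `μ₁ ^ d` to be bounded by a constant multiple of `μ ^ d`, whence `μ₁ ≤ μ`.
-/

theorem sum_pow_mul_eigenvector {n : ℕ} (A : Matrix (Fin n) (Fin n) ℕ) (v : Fin n → ℝ) (μ : ℝ)
    (h : (A.map (Nat.cast : ℕ → ℝ)).mulVec v = μ • v) (i : Fin n) (d : ℕ) :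
    ∑ j, ((A ^ d) i j : ℝ) * v j = μ ^ d * v i := by
  have key : ((A.map (Nat.cast : ℕ → ℝ)) ^ d).mulVec v = μ ^ d • v := by
    induction d with
    | zero => simp
    | succ d ih => rw [pow_succ, ← Matrix.mulVec_mulVec, h, Matrix.mulVec_smul, ih, smul_smul,
        pow_succ, mul_comm]
  have hmap : (A ^ d).map (Nat.cast : ℕ → ℝ) = (A.map (Nat.cast : ℕ → ℝ)) ^ d :=
    Matrix.map_pow A (Nat.castRingHom ℝ) d
  rw [← hmap] at key
  exact congrFun key i

/-- Row sums of `A ^ d` lie between positive multiples of `μ ^ d`; the constants are `v i / max v` and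
`v i / min v`. -/
theorem exists_rowSum_bounds {n : ℕ} (A : Matrix (Fin n) (Fin n) ℕ) (v : Fin n → ℝ)
    (hv : ∀ i, 0 < v i) (μ : ℝ)
    (h : (A.map (Nat.cast : ℕ → ℝ)).mulVec v = μ • v) (i : Fin n) :
    ∃ c C : ℝ, 0 < c ∧ 0 < C ∧ ∀ d : ℕ,
      c * μ ^ d ≤ ((∑ j, (A ^ d) i j : ℕ) : ℝ) ∧ ((∑ j, (A ^ d) i j : ℕ) : ℝ) ≤ C * μ ^ d := by
  have : Nonempty (Fin n) := ⟨i⟩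
  obtain ⟨a, ha⟩ := Finite.exists_min v
  obtain ⟨b, hb⟩ := Finite.exists_max v
  refine ⟨v i / v b, v i / v a, div_pos (hv i) (hv b), div_pos (hv i) (hv a), fun d => ?_⟩
  have e := sum_pow_mul_eigenvector A v μ h i d
  push_cast
  constructor
  · rw [div_mul_eq_mul_div, div_le_iff₀ (hv b), mul_comm, ← e, Finset.sum_mul]
    exact Finset.sum_le_sum fun j _ => mul_le_mul_of_nonneg_left (hb j) (Nat.cast_nonneg _)
  · rw [div_mul_eq_mul_div, le_div_iff₀ (hv a), mul_comm (v i), ← e, Finset.sum_mul]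
    exact Finset.sum_le_sum fun j _ => mul_le_mul_of_nonneg_left (ha j) (Nat.cast_nonneg _)

/-- If `M` and `M₁` are irreducible nonnegative integer matrices with
positive eigenvectors for eigenvalues `μ, μ₁ > 0`, and there are indices `i`, `i₁`
such that for every `d ≥ 1` the `i₁`-th row sum of `M₁ ^ (d + 1)` equals the `i`-th
row sum of `M ^ d`, with these row sums all at least `1`, then `μ₁ ≤ μ`. -/
theorem eigenvalue_le_of_shifted_row_sums
    (k k₁ : ℕ) (hk : 1 ≤ k) (hk₁ : 1 ≤ k₁)
    (M : Matrix (Fin k) (Fin k) ℕ) (M₁ : Matrix (Fin k₁) (Fin k₁) ℕ)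
    (hirr : ∀ i j : Fin k, ∃ r : ℕ, 1 ≤ r ∧ 0 < (M ^ r) i j)
    (hirr₁ : ∀ i j : Fin k₁, ∃ r : ℕ, 1 ≤ r ∧ 0 < (M₁ ^ r) i j)
    (v : Fin k → ℝ) (hv : ∀ i, 0 < v i) (μ : ℝ) (hμ : 0 < μ)
    (heig : (M.map (Nat.cast : ℕ → ℝ)).mulVec v = μ • v)
    (v₁ : Fin k₁ → ℝ) (hv₁ : ∀ i, 0 < v₁ i) (μ₁ : ℝ) (hμ₁ : 0 < μ₁)
    (heig₁ : (M₁.map (Nat.cast : ℕ → ℝ)).mulVec v₁ = μ₁ • v₁)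
    (i : Fin k) (i₁ : Fin k₁)
    (hrow : ∀ d : ℕ, 1 ≤ d → ∑ j, (M₁ ^ (d + 1)) i₁ j = ∑ j, (M ^ d) i j)
    (hpos : ∀ d : ℕ, 1 ≤ d → 1 ≤ ∑ j, (M ^ d) i j) :
    μ₁ ≤ μ := by
  obtain ⟨_, C, -, hC, hM⟩ := exists_rowSum_bounds M v hv μ heig i
  obtain ⟨c, _, hc, -, hM₁⟩ := exists_rowSum_bounds M₁ v₁ hv₁ μ₁ heig₁ i₁
  by_contra! hlt
  have hc' : 0 < c * μ₁ := mul_pos hc hμ₁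
  obtain ⟨N, hN⟩ := pow_unbounded_of_one_lt (C / (c * μ₁)) ((one_lt_div hμ).2 hlt)
  -- The exponent is raised to `N + 1` because row sums are compared only for `d ≥ 1`.
  have hN' : C / (c * μ₁) < (μ₁ / μ) ^ (N + 1) :=
    hN.trans_le (pow_le_pow_right₀ ((one_lt_div hμ).2 hlt).le N.le_succ)
  rw [div_pow, div_lt_div_iff₀ hc' (pow_pos hμ _)] at hN'
  have h1 := (hM₁ (N + 1 + 1)).1
  rw [hrow (N + 1) (by omega)] at h1
  have h2 := h1.trans (hM (N + 1)).2
  rw [pow_succ μ₁ (N + 1)] at h2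
  linarith
end

section
/- Let $m \geq 5$ be an integer and define $T_m(x) = (x-1)x^{m+1} - 2\left( x^{\lfloor m/2 \rfloor + 1} + x^{\lceil m/2 \rceil + 1} \right) - (x-1)$. Then for every real number $x \geq m^{3/m}$, one has $T_m(x) > 0$. Consequently, every real root of $T_m$ is strictly less than $m^{3/m}$; in particular the largest real root of $T_m$ is bounded above by $m^{3/m}$. -/
/-!
Put `v = √(x ^ m)` and `d = x - 1`. For `x ≥ m ^ (3/m)` one has `v² ≥ m³`, and
`d ≥ log x ≥ 3 log m / m ≥ 3 / m`. The two middle monomials satisfy `x ^ ⌊m/2⌋ ≤ v` and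
`x ^ ⌈m/2⌉ ≤ v x`, so `T_m(x) ≥ x (d (v² - 1) - 2 v (1 + x)) = x (d (v² - 1 - 2 v) - 4 v)`.
The bracket is positive because `d ≥ 3 / m` while `v` is of order at least `m ^ (3/2)`.
-/

open Real

/-- The polynomial `T_m(x) = (x-1)x^(m+1) - 2(x^(⌊m/2⌋+1) + x^(⌈m/2⌉+1)) - (x-1)`.
Here `⌊m/2⌋ = m / 2` and `⌈m/2⌉ = (m + 1) / 2` in natural-number arithmetic. -/
noncomputable def hironakaKinPoly (m : ℕ) (x : ℝ) : ℝ :=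
  (x - 1) * x ^ (m + 1) - 2 * (x ^ (m / 2 + 1) + x ^ ((m + 1) / 2 + 1)) - (x - 1)

/-- The numerical core: `d ≥ 3 / m` and `v ≥ m ^ (3/2)` make the leading term dominate. -/
lemma four_mul_lt_of_cube_le {m v d : ℝ} (hm : 5 ≤ m) (hv : 0 ≤ v) (hv2 : m ^ 3 ≤ v ^ 2)
    (hd : 3 ≤ d * m) : 4 * v < d * (v ^ 2 - 1 - 2 * v) := by
  -- `√5 ≥ 11/5`, hence `v ≥ √5 m ≥ (11/5) m ≥ 11`.
  have h1 : 11 / 5 * m ≤ v := by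
    refine (sq_le_sq₀ (by positivity) hv).mp ?_
    nlinarith [mul_le_mul_of_nonneg_right hm (sq_nonneg m), sq_nonneg m]
  have h11 : 11 ≤ v := by linarith
  have hA : 0 < v ^ 2 - 1 - 2 * v := by nlinarith
  have h2 : 3 * (v ^ 2 - 1 - 2 * v) ≤ d * m * (v ^ 2 - 1 - 2 * v) :=
    mul_le_mul_of_nonneg_right hd hA.le
  have h3 : 4 * v * m < 3 * (v ^ 2 - 1 - 2 * v) := by nlinarith
  have hm0 : 0 < m := by linarith
  nlinarith

lemma hironakaKinPoly_pos {m : ℕ} (hm : 5 ≤ m) {x : ℝ} (hx : (m : ℝ) ^ ((3 : ℝ) / m) ≤ x) :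
    0 < hironakaKinPoly m x := by
  have hm5 : (5 : ℝ) ≤ m := by exact_mod_cast hm
  have hm0 : (0 : ℝ) < m := by linarith
  have hb0 : 0 < (m : ℝ) ^ ((3 : ℝ) / m) := Real.rpow_pos_of_pos hm0 _
  have hx0 : 0 < x := hb0.trans_le hx
  have hlogm : 1 ≤ Real.log m := by
    rw [Real.le_log_iff_exp_le hm0]
    linarith [Real.exp_one_lt_d9]
  have hd : 3 ≤ (x - 1) * m := by
    have h1 : 3 / m * Real.log m ≤ Real.log x := by
      rw [← Real.log_rpow hm0]
      exact Real.log_le_log hb0 hx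
    have h2 := Real.log_le_sub_one_of_pos hx0
    have h3 : 3 / (m : ℝ) ≤ 3 / m * Real.log m := le_mul_of_one_le_right (by positivity) hlogm
    rw [← div_le_iff₀ hm0]
    linarith
  have hx1 : 1 ≤ x := by nlinarith
  have hxm : (m : ℝ) ^ 3 ≤ x ^ m := by
    calc (m : ℝ) ^ 3 = ((m : ℝ) ^ ((3 : ℝ) / m)) ^ m := by
          rw [← Real.rpow_mul_natCast hm0.le, div_mul_cancel₀ _ hm0.ne']
          norm_cast
      _ ≤ x ^ m := pow_le_pow_left₀ hb0.le hx m
  obtain ⟨v, hv⟩ : ∃ v, v = √(x ^ m) := ⟨_, rfl⟩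
  have hv0 : 0 ≤ v := hv ▸ Real.sqrt_nonneg _
  have hv2 : v ^ 2 = x ^ m := by rw [hv]; exact Real.sq_sqrt (by positivity)
  have hp : x ^ (m / 2) ≤ v := by
    refine (sq_le_sq₀ (by positivity) hv0).mp ?_
    rw [hv2, ← pow_mul]
    exact pow_le_pow_right₀ hx1 (by lia)
  have hq : x ^ ((m + 1) / 2) ≤ v * x := by
    refine (sq_le_sq₀ (by positivity) (by positivity)).mp ?_
    rw [mul_pow, hv2, ← pow_mul, ← pow_add]
    exact pow_le_pow_right₀ hx1 (by lia)
  have hkey := four_mul_lt_of_cube_le hm5 hv0 (hv2 ▸ hxm) hd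
  have hbr : 0 < (x - 1) * (v ^ 2 - 1) - 2 * (x ^ (m / 2) + x ^ ((m + 1) / 2)) := by
    linarith
  have hT : hironakaKinPoly m x =
      x * ((x - 1) * (v ^ 2 - 1) - 2 * (x ^ (m / 2) + x ^ ((m + 1) / 2))) + (x - 1) ^ 2 := by
    rw [hironakaKinPoly, hv2]
    ring
  rw [hT]
  positivity

/-- For `m ≥ 5`, `T_m(x) > 0` for all real `x ≥ m^(3/m)`; consequently
every real root of `T_m` is strictly less than `m^(3/m)`. -/
theorem hironakaKinPoly_pos_and_roots_lt
    (m : ℕ) (hm : 5 ≤ m) :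
    (∀ x : ℝ, (m : ℝ) ^ ((3 : ℝ) / m) ≤ x → 0 < hironakaKinPoly m x) ∧
    (∀ x : ℝ, hironakaKinPoly m x = 0 → x < (m : ℝ) ^ ((3 : ℝ) / m)) := by
  refine ⟨fun x hx => hironakaKinPoly_pos hm hx, fun x h0 => ?_⟩
  by_contra! hx
  exact (hironakaKinPoly_pos hm hx).ne' h0
end

section
/- Let $m \geq 1$ be an integer and define $T_m(x) = (x-1)x^{m+1} - 2\left( x^{\lfloor m/2 \rfloor + 1} + x^{\lceil m/2 \rceil + 1} \right) - (x-1)$. Then $T_m(1) = -4$. Moreover, if $m \geq 5$, then $T_m$ has a real root in the open interval $(1, m^{3/m})$. -/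
/-!
`T_m` is continuous and `T_m(1) = -4 < 0`, so by the intermediate value theorem it suffices that
`T_m(x) > 0` at `x = m^(3/m)`. There `x^m = m^3 = s^2` with `s = m * √m`, while both middle powers
are controlled by `s`: `x^⌊m/2⌋ ≤ s` and `x^⌈m/2⌉ ≤ x * s`. Hence
`T_m(x) ≥ x * ((x - 1) * (s^2 - 1) - 2 * s * (1 + x))`, and the bracket is positive as soon as
`(x - 1) * (s^2 - 2 * s - 1) > 4 * s`. The estimate `x - 1 ≥ 3 * log m / m > 3 / m`, valid since
`m > e`, is enough for this when `m ≥ 5`.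
-/

open Real

/-- Positivity at the right endpoint: only `x ^ m = m ^ 3` and `x > 1 + 3 / m` are used about
`x = m^(3/m)`. -/
lemma hironakaKinPoly_pos_of_pow_eq (m : ℕ) (hm : 5 ≤ m) (x : ℝ) (hx : 1 + 3 / (m : ℝ) < x)
    (hpow : x ^ m = (m : ℝ) ^ 3) : 0 < hironakaKinPoly m x := by
  have hM : (5 : ℝ) ≤ m := by exact_mod_cast hm
  have hMpos : (0 : ℝ) < m := by linarith
  have hx1 : 1 < x := by
    have : 0 < 3 / (m : ℝ) := by positivity
    linarith
  have hx3 : 3 < (x - 1) * m := by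
    rw [← div_lt_iff₀ hMpos]
    linarith
  obtain ⟨r, hr, hr2⟩ : ∃ r : ℝ, 2.2 ≤ r ∧ r ^ 2 = m :=
    ⟨√m, Real.le_sqrt_of_sq_le (by norm_num; linarith), Real.sq_sqrt hMpos.le⟩
  obtain ⟨s, hs⟩ : ∃ s : ℝ, s = m * r := ⟨_, rfl⟩
  have hspos : 0 < s := by rw [hs]; positivity
  have hs2 : s ^ 2 = (m : ℝ) ^ 3 := by rw [hs, mul_pow, hr2]; ring
  have hs11 : 11 ≤ s := by rw [hs]; nlinarith
  have hA : x ^ (m / 2) ≤ s := by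
    refine le_of_sq_le_sq ?_ hspos.le
    rw [hs2, ← hpow, ← pow_mul]
    exact pow_le_pow_right₀ hx1.le (by omega)
  have hB : x ^ ((m + 1) / 2) ≤ s * x := by
    calc x ^ ((m + 1) / 2) ≤ x ^ (m / 2 + 1) := pow_le_pow_right₀ hx1.le (by omega)
      _ = x ^ (m / 2) * x := pow_succ _ _
      _ ≤ s * x := by gcongr
  have hkey : 4 * s < (x - 1) * (s ^ 2 - 2 * s - 1) := by
    have h1 : 3 * (s ^ 2 - 2 * s - 1) < (x - 1) * m * (s ^ 2 - 2 * s - 1) :=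
      mul_lt_mul_of_pos_right hx3 (by nlinarith)
    have h2 : 4 * s * m ≤ 3 * (s ^ 2 - 2 * s - 1) := by
      -- Since `3 * s ^ 2 ≥ 6.6 * m * s`, there remains `2.6 * m * s ≥ 13 * s` to absorb `6 * s + 3`.
      have h3 : 2.2 * m * s ≤ s ^ 2 := by
        have : 2.2 * (m : ℝ) ≤ s := by rw [hs]; nlinarith
        nlinarith
      have h4 : 5 * s ≤ m * s := by gcongr
      linarith
    refine lt_of_mul_lt_mul_right (a := (m : ℝ)) ?_ hMpos.le
    linarith
  have hlow : 0 < x * ((x - 1) * (s ^ 2 - 1) - 2 * s * (1 + x)) :=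
    mul_pos (by linarith) (by linarith)
  have hAB : x * (x ^ (m / 2) + x ^ ((m + 1) / 2)) ≤ x * (s + s * x) := by gcongr
  unfold hironakaKinPoly
  rw [pow_succ x m, pow_succ x (m / 2), pow_succ x ((m + 1) / 2), hpow, ← hs2]
  nlinarith

/-- For `m ≥ 1`, `T_m(1) = -4`; moreover if `m ≥ 5`, then `T_m` has a
real root in the open interval `(1, m^(3/m))`. -/
theorem hironakaKinPoly_at_one_and_root_exists
    (m : ℕ) (hm : 1 ≤ m) :
    hironakaKinPoly m 1 = -4 ∧
    (5 ≤ m → ∃ x : ℝ, 1 < x ∧ x < (m : ℝ) ^ ((3 : ℝ) / m) ∧ hironakaKinPoly m x = 0) := by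
  have h1 : hironakaKinPoly m 1 = -4 := by
    norm_num [hironakaKinPoly]
  refine ⟨h1, fun h5 => ?_⟩
  have hM : (5 : ℝ) ≤ m := by exact_mod_cast h5
  have hMpos : (0 : ℝ) < m := by linarith
  have hlog : 1 < Real.log m := by
    rw [Real.lt_log_iff_exp_lt hMpos]
    linarith [Real.exp_one_lt_d9]
  have hlt : 1 + 3 / (m : ℝ) < (m : ℝ) ^ ((3 : ℝ) / m) := by
    rw [Real.rpow_def_of_pos hMpos]
    have h3 : 0 < 3 / (m : ℝ) := by positivity
    nlinarith [Real.add_one_le_exp (Real.log m * (3 / m))]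
  have hpow : ((m : ℝ) ^ ((3 : ℝ) / m)) ^ m = (m : ℝ) ^ 3 := by
    rw [← Real.rpow_natCast, ← Real.rpow_mul hMpos.le, div_mul_cancel₀ _ hMpos.ne']
    norm_cast
  have hpos := hironakaKinPoly_pos_of_pow_eq m h5 _ hlt hpow
  have hle : 1 ≤ (m : ℝ) ^ ((3 : ℝ) / m) := by
    have : 0 < 3 / (m : ℝ) := by positivity
    linarith
  have hcont : Continuous (hironakaKinPoly m) := by
    unfold hironakaKinPoly
    fun_prop
  obtain ⟨x, hx, hx0⟩ := intermediate_value_Ioo hle hcont.continuousOn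
    (show (0 : ℝ) ∈ Set.Ioo _ _ from ⟨by rw [h1]; norm_num, hpos⟩)
  exact ⟨x, hx.1, hx.2, hx0⟩
end

section
/- Let $m \geq 5$ be an integer. Then for every real number $x \geq m^{3/m}$, one has $(x-1) + x^{-(m+1)} > 2\left( x^{\lfloor m/2 \rfloor - m} + x^{\lceil m/2 \rceil - m} \right) + x^{-m}$. -/
open Real

/-!
Put `c = ⌈m/2⌉`. The two middle powers are `x^{-c}` and `x^{-⌊m/2⌋} ≤ x · x^{-c}`. The hypothesis on
`x` says `x^m ≥ m^3`, so `x^c ≥ m^{3/2}`, and `m ≥ 5` gives `x^{-c} ≤ 5/(11 m)`, while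
`x^{-m} ≤ m^{-3} ≤ 1/(25 m)`. On the other side, `x ≥ exp (3 log m / m) ≥ 1 + 3/m`. These bounds
leave enough slack to discard the positive term `x^{-(m+1)}`, and the claim becomes linear in `1/m`.
-/

theorem key_inequality_for_T
    (m : ℕ) (hm : 5 ≤ m) :
    ∀ x : ℝ, (m : ℝ) ^ ((3 : ℝ) / m) ≤ x →
      2 * (x ^ (((m / 2 : ℕ) : ℤ) - (m : ℤ)) + x ^ ((((m + 1) / 2 : ℕ) : ℤ) - (m : ℤ)))
          + x ^ (-(m : ℤ))
        < (x - 1) + x ^ (-((m : ℤ) + 1)) := by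
  intro x hx
  have hm5 : (5 : ℝ) ≤ m := by exact_mod_cast hm
  have hm0 : (0 : ℝ) < m := by linarith
  have hx3 : 1 + 3 * (1 / (m : ℝ)) ≤ x := by
    have hlog : 1 ≤ Real.log m := by
      rw [Real.le_log_iff_exp_le hm0]
      linarith [Real.exp_one_lt_d9]
    have h1 : 3 * (1 / (m : ℝ)) ≤ Real.log m * (3 / m) := by
      have : 0 < 3 / (m : ℝ) := by positivity
      calc 3 * (1 / (m : ℝ)) = 1 * (3 / m) := by ring
        _ ≤ _ := by gcongr
    rw [Real.rpow_def_of_pos hm0] at hx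
    linarith [Real.add_one_le_exp (Real.log m * (3 / m))]
  have ht : 0 < 1 / (m : ℝ) := by positivity
  have hx1 : 1 ≤ x := by linarith
  have hx0 : 0 < x := by linarith
  have hxm : (m : ℝ) ^ 3 ≤ x ^ m := by
    calc (m : ℝ) ^ 3 = ((m : ℝ) ^ ((3 : ℝ) / m)) ^ m := by
          rw [← Real.rpow_natCast, ← Real.rpow_natCast, ← Real.rpow_mul hm0.le,
            div_mul_cancel₀ _ hm0.ne']
          norm_num
      _ ≤ x ^ m := by gcongr
  obtain ⟨c, hc⟩ : ∃ c, c = (m + 1) / 2 := ⟨_, rfl⟩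
  have hP : 11 / 5 * (m : ℝ) ≤ x ^ c := by
    have h1 : x ^ m ≤ (x ^ c) ^ 2 := by
      rw [← pow_mul]
      exact pow_le_pow_right₀ hx1 (by omega)
    -- `(11/5)² ≤ 5 ≤ m`
    refine (pow_le_pow_iff_left₀ (by positivity) (by positivity) two_ne_zero).mp ?_
    nlinarith [mul_le_mul_of_nonneg_right hm5 (sq_nonneg (m : ℝ)), sq_nonneg (m : ℝ)]
  have ha : (x ^ c)⁻¹ ≤ 5 / 11 * (1 / (m : ℝ)) := by
    calc (x ^ c)⁻¹ ≤ (11 / 5 * (m : ℝ))⁻¹ := by gcongr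
      _ = _ := by field_simp
  have hb : (x ^ m)⁻¹ ≤ 1 / 25 * (1 / (m : ℝ)) := by
    calc (x ^ m)⁻¹ ≤ (25 * (m : ℝ))⁻¹ := by
          gcongr
          nlinarith [mul_le_mul hm5 hm5 (by norm_num) hm0.le]
      _ = _ := by field_simp
  have ht5 : 1 / (m : ℝ) ≤ 1 / 5 := by gcongr
  have e1 : x ^ (((m / 2 : ℕ) : ℤ) - (m : ℤ)) = (x ^ c)⁻¹ := by
    rw [show ((m / 2 : ℕ) : ℤ) - (m : ℤ) = -(c : ℤ) by omega, zpow_neg, zpow_natCast]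
  have e2 : x ^ ((((m + 1) / 2 : ℕ) : ℤ) - (m : ℤ)) ≤ x * (x ^ c)⁻¹ := by
    calc x ^ ((((m + 1) / 2 : ℕ) : ℤ) - (m : ℤ)) ≤ x ^ (1 + -(c : ℤ)) :=
          zpow_le_zpow_right₀ hx1 (by omega)
      _ = _ := by rw [zpow_add₀ hx0.ne', zpow_one, zpow_neg, zpow_natCast]
  have e3 : x ^ (-(m : ℤ)) = (x ^ m)⁻¹ := by rw [zpow_neg, zpow_natCast]
  have e4 : 0 < x ^ (-((m : ℤ) + 1)) := by positivity
  have h11 : (x - 1) * (x ^ c)⁻¹ ≤ (x - 1) * (1 / 11) :=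
    mul_le_mul_of_nonneg_left (by linarith) (by linarith)
  rw [e1, e3]
  linarith
end
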